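/- arXiv:1501.06646 — 5 statements merged into one kernel-verified Lean document; each statement's English description precedes it below -/
import Mathlib

section
/- Let V be a real inner product space with inner product ⟪·,·⟫ and norm ‖·‖, and let a : V × V → ℝ be a bilinear form that is symmetric, positive semidefinite (a(v,v) ≥ 0 for all v), and bounded (there is M ≥ 0 with |a(u,v)| ≤ M‖u‖‖v‖ for all u,v). Let T > 0, let ξ : ℝ → V be continuously differentiable on [0,T] with ξ(0) = 0, let ρ : ℝ → V be continuous on [0,T], and suppose that for every t ∈ [0,T] and every v ∈ V, ⟪ξ'(t), v⟫ + a(ξ(t), v) = ⟪ρ(t), v⟫. Then for every t ∈ [0,T], ∫₀ᵗ ‖ξ'(s)‖² ds + a(ξ(t), ξ(t)) ≤ ∫₀ᵗ ‖ρ(s)‖² ds. -/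
/-!
Testing the equation with `v = ξ'(t)` and applying Young's inequality to `⟪ρ, ξ'⟫` gives the
pointwise bound `‖ξ'‖² + 2 a(ξ, ξ') ≤ ‖ρ‖²`. By symmetry of `a`, the second summand is the
derivative of `t ↦ a(ξ(t), ξ(t))`, which vanishes at `0`; integrating over `[0, t]` yields the
estimate. Boundedness of `a` enters only to make it a continuous bilinear map, so that the
product rule and the fundamental theorem of calculus apply.
-/


open scoped RealInnerProductSpace

/-- Abstract energy estimate for the semi-discrete scheme with a
symmetric, positive semidefinite, bounded bilinear form. -/
theorem stmt_1 {V : Type*} [NormedAddCommGroup V] [InnerProductSpace ℝ V]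
    (a : V →ₗ[ℝ] V →ₗ[ℝ] ℝ)
    (hsymm : ∀ u v : V, a u v = a v u)
    (hpos : ∀ v : V, 0 ≤ a v v)
    (M : ℝ) (hM : 0 ≤ M)
    (hbound : ∀ u v : V, |a u v| ≤ M * ‖u‖ * ‖v‖)
    (T : ℝ) (hT : 0 < T)
    (ξ ξ' ρ : ℝ → V)
    (hξ : ∀ t ∈ Set.Icc (0:ℝ) T, HasDerivWithinAt ξ (ξ' t) (Set.Icc (0:ℝ) T) t)
    (hξ' : ContinuousOn ξ' (Set.Icc (0:ℝ) T))
    (hξ0 : ξ 0 = 0)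
    (hρ : ContinuousOn ρ (Set.Icc (0:ℝ) T))
    (heq : ∀ t ∈ Set.Icc (0:ℝ) T, ∀ v : V, ⟪ξ' t, v⟫ + a (ξ t) v = ⟪ρ t, v⟫) :
    ∀ t ∈ Set.Icc (0:ℝ) T,
      (∫ s in (0:ℝ)..t, ‖ξ' s‖ ^ 2) + a (ξ t) (ξ t) ≤ ∫ s in (0:ℝ)..t, ‖ρ s‖ ^ 2 := by
  -- `a` as a continuous bilinear map
  let A : V →L[ℝ] V →L[ℝ] ℝ := LinearMap.mkContinuous₂ a M hbound
  have hA : ∀ u v, A u v = a u v := fun _ _ => rfl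
  intro t ht
  have hsub : Set.Icc (0:ℝ) t ⊆ Set.Icc (0:ℝ) T := Set.Icc_subset_Icc_right ht.2
  have hξc : ContinuousOn ξ (Set.Icc (0:ℝ) T) := fun s hs => (hξ s hs).continuousWithinAt
  have hderiv : ∀ s ∈ Set.Icc (0:ℝ) T,
      HasDerivWithinAt (fun s => A (ξ s) (ξ s)) (2 * A (ξ s) (ξ' s)) (Set.Icc (0:ℝ) T) s := by
    intro s hs
    have h := (A.hasFDerivAt.comp_hasDerivWithinAt s (hξ s hs)).clm_apply (hξ s hs)
    refine h.congr_deriv ?_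
    change A (ξ' s) (ξ s) + A (ξ s) (ξ' s) = _
    rw [hA, hA, hsymm (ξ' s) (ξ s)]
    ring
  have hcross : ContinuousOn (fun s => 2 * A (ξ s) (ξ' s)) (Set.Icc (0:ℝ) t) :=
    continuousOn_const.mul
      (((A.continuous.comp_continuousOn hξc).clm_apply hξ').mono hsub)
  have hint : IntervalIntegrable (fun s => 2 * A (ξ s) (ξ' s)) MeasureTheory.volume 0 t :=
    hcross.intervalIntegrable_of_Icc ht.1
  have hint' : IntervalIntegrable (fun s => ‖ξ' s‖ ^ 2) MeasureTheory.volume 0 t :=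
    ((hξ'.mono hsub).norm.pow 2).intervalIntegrable_of_Icc ht.1
  have hintρ : IntervalIntegrable (fun s => ‖ρ s‖ ^ 2) MeasureTheory.volume 0 t :=
    ((hρ.mono hsub).norm.pow 2).intervalIntegrable_of_Icc ht.1
  have hFTC : ∫ s in (0:ℝ)..t, 2 * A (ξ s) (ξ' s) = a (ξ t) (ξ t) := by
    rw [intervalIntegral.integral_eq_sub_of_hasDerivAt_of_le ht.1
      (fun s hs => ((hderiv s (hsub hs)).continuousWithinAt).mono hsub)
      (fun s hs => (hderiv s (hsub ⟨hs.1.le, hs.2.le⟩)).hasDerivAt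
        (Icc_mem_nhds hs.1 (hs.2.trans_le ht.2))) hint]
    simp [hξ0, hA]
  rw [← hFTC, ← intervalIntegral.integral_add hint' hint]
  refine intervalIntegral.integral_mono_on ht.1 (hint'.add hint) hintρ fun s hs => ?_
  -- test with `v = ξ' s`; Young's inequality is `0 ≤ ‖ρ - ξ'‖²` expanded
  have htest := heq s (hsub hs) (ξ' s)
  rw [real_inner_self_eq_norm_sq] at htest
  have hYoung := norm_sub_sq_real (ρ s) (ξ' s)
  rw [hA]
  nlinarith [sq_nonneg ‖ρ s - ξ' s‖]
end

section
/- Let V be a real inner product space with inner product ⟪·,·⟫ and norm ‖·‖, and let a : V × V → ℝ be a bilinear form that is symmetric and positive semidefinite (a(v,v) ≥ 0 for all v). Let Δt > 0, let k ≥ 1 be an integer, let ξ⁰, ξ¹, …, ξᵏ ∈ V with ξ⁰ = 0, and let ρ¹, …, ρᵏ ∈ V. Suppose that for every n ∈ {1, …, k} and every v ∈ V, ⟪(ξⁿ − ξⁿ⁻¹)/Δt, v⟫ + a(ξⁿ, v) = ⟪ρⁿ, v⟫. Then Δt ∑_{n=1}^{k} ‖(ξⁿ − ξⁿ⁻¹)/Δt‖²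 + a(ξᵏ, ξᵏ) ≤ Δt ∑_{n=1}^{k} ‖ρⁿ‖². -/
open scoped RealInnerProductSpace

/-!
Write `d = Δt⁻¹ • (ξ n - ξ (n - 1))`. Testing the scheme with `v = d` and bounding the right-hand
side by `2 ⟪ρ n, d⟫ ≤ ‖ρ n‖ ^ 2 + ‖d‖ ^ 2` gives `‖d‖ ^ 2 + 2 a(ξ n, d) ≤ ‖ρ n‖ ^ 2`. For symmetric
positive semidefinite `a`, `2 a(y, y - x) = a(y, y) - a(x, x) + a(y - x, y - x)` is at least
`a(y, y) - a(x, x)`, so after multiplication by `Δt` the form terms telescope over `n`.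
-/

/-- The energy inequality for a single backward Euler step from `x` to `y` with load `r`. -/
lemma energy_step {V : Type*} [NormedAddCommGroup V] [InnerProductSpace ℝ V]
    (a : V →ₗ[ℝ] V →ₗ[ℝ] ℝ) (hsymm : ∀ u v : V, a u v = a v u)
    (hpos : ∀ v : V, 0 ≤ a v v) (Δt : ℝ) (hΔt : 0 < Δt) (x y r : V)
    (h : ∀ v : V, ⟪Δt⁻¹ • (y - x), v⟫ + a y v = ⟪r, v⟫) :
    Δt * ‖Δt⁻¹ • (y - x)‖ ^ 2 + a y y ≤ Δt * ‖r‖ ^ 2 + a x x := by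
  have hyx : y - x = Δt • (Δt⁻¹ • (y - x)) := by
    rw [smul_smul, mul_inv_cancel₀ hΔt.ne', one_smul]
  set d := Δt⁻¹ • (y - x)
  have htest := h d
  rw [real_inner_self_eq_norm_sq] at htest
  have hyoung : 2 * ⟪r, d⟫ ≤ ‖r‖ ^ 2 + ‖d‖ ^ 2 := by
    linarith [norm_sub_sq_real r d, sq_nonneg ‖r - d‖]
  have hyd : a y (y - x) = Δt * a y d := by
    rw [hyx, map_smul, smul_eq_mul]
  have hsq := hpos (y - x)
  have hxy := hsymm x y
  simp only [map_sub, LinearMap.sub_apply] at hyd hsq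
  have hmul : Δt * (‖d‖ ^ 2 + 2 * a y d) ≤ Δt * ‖r‖ ^ 2 :=
    mul_le_mul_of_nonneg_left (by linarith) hΔt.le
  linarith

/-- Discrete energy-stability estimate for the backward Euler scheme
with a symmetric positive semidefinite bilinear form. -/
theorem stmt_2 {V : Type*} [NormedAddCommGroup V] [InnerProductSpace ℝ V]
    (a : V →ₗ[ℝ] V →ₗ[ℝ] ℝ)
    (hsymm : ∀ u v : V, a u v = a v u)
    (hpos : ∀ v : V, 0 ≤ a v v)
    (Δt : ℝ) (hΔt : 0 < Δt) (k : ℕ) (hk : 1 ≤ k)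
    (ξ ρ : ℕ → V) (hξ0 : ξ 0 = 0)
    (heq : ∀ n ∈ Finset.Icc 1 k, ∀ v : V,
      ⟪Δt⁻¹ • (ξ n - ξ (n - 1)), v⟫ + a (ξ n) v = ⟪ρ n, v⟫) :
    Δt * ∑ n ∈ Finset.Icc 1 k, ‖Δt⁻¹ • (ξ n - ξ (n - 1))‖ ^ 2 + a (ξ k) (ξ k)
      ≤ Δt * ∑ n ∈ Finset.Icc 1 k, ‖ρ n‖ ^ 2 := by
  have key : ∀ m ≤ k,
      Δt * ∑ n ∈ Finset.Icc 1 m, ‖Δt⁻¹ • (ξ n - ξ (n - 1))‖ ^ 2 + a (ξ m) (ξ m)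
        ≤ Δt * ∑ n ∈ Finset.Icc 1 m, ‖ρ n‖ ^ 2 := by
    intro m
    induction m with
    | zero => simp [hξ0]
    | succ m ih =>
      intro hm
      have hstep := energy_step a hsymm hpos Δt hΔt (ξ m) (ξ (m + 1)) (ρ (m + 1))
        (heq (m + 1) (Finset.mem_Icc.mpr ⟨by omega, hm⟩))
      have hprev := ih (by omega)
      rw [Finset.sum_Icc_succ_top (by omega), Finset.sum_Icc_succ_top (by omega),
        Nat.add_sub_cancel, mul_add, mul_add]
      linarith
  exact key k le_rfl
end

section
/- Let E be a real Banach space, let a < b be real numbers with h = b − a and midpoint m = (a+b)/2, and let u : ℝ → E be three times continuously differentiable on [a,b]. Then u'(m) − ½(u'(a) + u'(b)) = −½ [ ∫_a^m (t − a) u'''(t) dt + ∫_m^b (b − t) u'''(t) dt ] (Bochner integrals), and consequently ‖u'(m) − ½(u'(a) + u'(b))‖² ≤ (h³/48) ∫_a^b ‖u'''(t)‖² dt. -/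
/-! Integration by parts: `(t - s) • u''(t) - u'(t)` is a primitive of `(t - s) • u'''(t)`. Taking
`s = a` on `[a, m]` and `s = b` on `[m, b]`, the two `u''(m)` terms cancel because `m` is the
midpoint, which gives the identity. For the estimate, the triangle inequality moves the norm inside
both integrals, and the Cauchy–Schwarz inequality is applied on each half, where the weight has
squared `L²` norm `(h/2)³/3 = h³/24`. Since the weights on the two halves have equal `L²` norms,
recombining with `(x + y)² ≤ 2 (x² + y²)` preserves the constant of Cauchy–Schwarz on `[a, b]`. -/

/-- Cauchy–Schwarz on an interval, from the nonpositive discriminant of the quadratic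
`x ↦ ∫ (x f + g)²`. -/
theorem sq_integral_mul_le {p q : ℝ} (hpq : p ≤ q) {f g : ℝ → ℝ}
    (hf : ContinuousOn f (Set.Icc p q)) (hg : ContinuousOn g (Set.Icc p q)) :
    (∫ t in p..q, f t * g t) ^ 2 ≤ (∫ t in p..q, f t ^ 2) * ∫ t in p..q, g t ^ 2 := by
  have key : ∀ x : ℝ, 0 ≤ (∫ t in p..q, f t ^ 2) * (x * x)
      + (2 * ∫ t in p..q, f t * g t) * x + ∫ t in p..q, g t ^ 2 := by
    intro x
    have h0 : 0 ≤ ∫ t in p..q, (x * f t + g t) ^ 2 :=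
      intervalIntegral.integral_nonneg hpq fun t _ => sq_nonneg _
    have h1 : IntervalIntegrable (fun t => (x * x) * f t ^ 2) MeasureTheory.volume p q :=
      ((hf.pow 2).intervalIntegrable_of_Icc hpq).const_mul (x * x)
    have h2 : IntervalIntegrable (fun t => (2 * x) * (f t * g t)) MeasureTheory.volume p q :=
      ((hf.mul hg).intervalIntegrable_of_Icc hpq).const_mul (2 * x)
    have h3 : IntervalIntegrable (fun t => g t ^ 2) MeasureTheory.volume p q :=
      (hg.pow 2).intervalIntegrable_of_Icc hpq
    have h4 : ∫ t in p..q, (x * f t + g t) ^ 2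
        = ∫ t in p..q, ((x * x) * f t ^ 2 + (2 * x) * (f t * g t)) + g t ^ 2 := by
      congr 1; ext t; ring
    rw [h4, intervalIntegral.integral_add (h1.add h2) h3, intervalIntegral.integral_add h1 h2,
      intervalIntegral.integral_const_mul, intervalIntegral.integral_const_mul] at h0
    linarith
  have := discrim_le_zero key
  unfold discrim at this
  linarith

theorem integral_sub_smul_eq {E : Type*} [NormedAddCommGroup E] [NormedSpace ℝ E]
    [CompleteSpace E] {p q : ℝ} (hpq : p ≤ q) (s : ℝ) {v v' v'' : ℝ → E}
    (hv : ∀ t ∈ Set.Icc p q, HasDerivWithinAt v (v' t) (Set.Icc p q) t)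
    (hv' : ∀ t ∈ Set.Icc p q, HasDerivWithinAt v' (v'' t) (Set.Icc p q) t)
    (hv'' : ContinuousOn v'' (Set.Icc p q)) :
    ∫ t in p..q, (t - s) • v'' t = ((q - s) • v' q - v q) - ((p - s) • v' p - v p) := by
  have hd : ∀ t ∈ Set.Icc p q, HasDerivWithinAt (fun t => (t - s) • v' t - v t)
      ((t - s) • v'' t) (Set.Icc p q) t := by
    intro t ht
    have := (((hasDerivWithinAt_id t (Set.Icc p q)).sub_const s).smul (hv' t ht)).sub (hv t ht)
    simp only [one_smul, add_sub_cancel_right, id_eq] at this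
    exact this
  refine intervalIntegral.integral_eq_sub_of_hasDerivAt_of_le hpq
    (fun t ht => (hd t ht).continuousWithinAt)
    (fun t ht => (hd t (Set.Ioo_subset_Icc_self ht)).hasDerivAt (Icc_mem_nhds ht.1 ht.2)) ?_
  exact ContinuousOn.intervalIntegrable_of_Icc hpq (by fun_prop)

theorem sq_norm_integral_smul_le {E : Type*} [NormedAddCommGroup E] [NormedSpace ℝ E]
    {p q : ℝ} (hpq : p ≤ q) {f : ℝ → ℝ} {w : ℝ → E}
    (hf : ContinuousOn f (Set.Icc p q)) (hw : ContinuousOn w (Set.Icc p q)) :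
    ‖∫ t in p..q, f t • w t‖ ^ 2 ≤ (∫ t in p..q, f t ^ 2) * ∫ t in p..q, ‖w t‖ ^ 2 := by
  have h1 : ‖∫ t in p..q, f t • w t‖ ≤ ∫ t in p..q, |f t| * ‖w t‖ := by
    simpa [norm_smul] using
      intervalIntegral.norm_integral_le_integral_norm (f := fun t => f t • w t) hpq
  calc _ ≤ (∫ t in p..q, |f t| * ‖w t‖) ^ 2 := by gcongr
    _ ≤ _ := by simpa using sq_integral_mul_le hpq hf.abs hw.norm

/-- Crank–Nicolson consistency estimate for
`r₁ = u'(m) − ½(u'(a) + u'(b))`, with `m = (a+b)/2` and `h = b − a`. -/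
theorem stmt_7 {E : Type*} [NormedAddCommGroup E] [NormedSpace ℝ E] [CompleteSpace E]
    (a b : ℝ) (hab : a < b)
    (u u' u'' u''' : ℝ → E)
    (hu : ∀ t ∈ Set.Icc a b, HasDerivWithinAt u (u' t) (Set.Icc a b) t)
    (hu' : ∀ t ∈ Set.Icc a b, HasDerivWithinAt u' (u'' t) (Set.Icc a b) t)
    (hu'' : ∀ t ∈ Set.Icc a b, HasDerivWithinAt u'' (u''' t) (Set.Icc a b) t)
    (hu''' : ContinuousOn u''' (Set.Icc a b)) :
    u' ((a + b) / 2) - (1/2 : ℝ) • (u' a + u' b) =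
      -((1/2 : ℝ) • ((∫ t in a..((a + b) / 2), (t - a) • u''' t)
        + ∫ t in ((a + b) / 2)..b, (b - t) • u''' t)) ∧
    ‖u' ((a + b) / 2) - (1/2 : ℝ) • (u' a + u' b)‖ ^ 2
      ≤ ((b - a) ^ 3 / 48) * ∫ t in a..b, ‖u''' t‖ ^ 2 := by
  obtain ⟨m, hm⟩ : ∃ m, m = (a + b) / 2 := ⟨_, rfl⟩
  rw [← hm]
  have ham : a ≤ m := by linarith
  have hmb : m ≤ b := by linarith
  have hL : Set.Icc a m ⊆ Set.Icc a b := Set.Icc_subset_Icc_right hmb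
  have hR : Set.Icc m b ⊆ Set.Icc a b := Set.Icc_subset_Icc_left ham
  have e1 := integral_sub_smul_eq ham a (fun t ht => (hu' t (hL ht)).mono hL)
    (fun t ht => (hu'' t (hL ht)).mono hL) (hu'''.mono hL)
  have e2 := integral_sub_smul_eq hmb b (fun t ht => (hu' t (hR ht)).mono hR)
    (fun t ht => (hu'' t (hR ht)).mono hR) (hu'''.mono hR)
  have e3 : ∫ t in m..b, (b - t) • u''' t = -∫ t in m..b, (t - b) • u''' t := by
    rw [← intervalIntegral.integral_neg]
    congr 1; ext t; rw [← neg_smul, neg_sub]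
  have hid : u' m - (1/2 : ℝ) • (u' a + u' b) =
      -((1/2 : ℝ) • ((∫ t in a..m, (t - a) • u''' t) + ∫ t in m..b, (b - t) • u''' t)) := by
    rw [e3, e1, e2, hm]
    module
  refine ⟨hid, ?_⟩
  have c1 := sq_norm_integral_smul_le ham (f := fun t => t - a) (by fun_prop) (hu'''.mono hL)
  have c2 := sq_norm_integral_smul_le hmb (f := fun t => b - t) (by fun_prop) (hu'''.mono hR)
  have w1 : ∫ t in a..m, (t - a) ^ 2 = (b - a) ^ 3 / 24 := by
    rw [intervalIntegral.integral_comp_sub_right (fun t => t ^ 2), integral_pow, hm]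
    norm_num; ring
  have w2 : ∫ t in m..b, (b - t) ^ 2 = (b - a) ^ 3 / 24 := by
    rw [intervalIntegral.integral_comp_sub_left (fun t => t ^ 2), integral_pow, hm]
    norm_num; ring
  have hadd : (∫ t in a..m, ‖u''' t‖ ^ 2) + ∫ t in m..b, ‖u''' t‖ ^ 2
      = ∫ t in a..b, ‖u''' t‖ ^ 2 :=
    intervalIntegral.integral_add_adjacent_intervals
      (((hu'''.mono hL).norm.pow 2).intervalIntegrable_of_Icc ham)
      (((hu'''.mono hR).norm.pow 2).intervalIntegrable_of_Icc hmb)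
  rw [w1] at c1
  rw [w2] at c2
  rw [hid, norm_neg, norm_smul, ← hadd, mul_pow, Real.norm_eq_abs, sq_abs]
  set I := ∫ t in a..m, (t - a) • u''' t
  set J := ∫ t in m..b, (b - t) • u''' t
  have htri : ‖I + J‖ ^ 2 ≤ 2 * (‖I‖ ^ 2 + ‖J‖ ^ 2) :=
    (pow_le_pow_left₀ (norm_nonneg _) (norm_add_le I J) 2).trans add_sq_le
  linarith
end

section
/- Let E be a real Banach space, let a < b be real numbers with h = b − a and midpoint m = (a+b)/2, and let u : ℝ → E be three times continuously differentiable on [a,b]. Then u'(m) − (u(b) − u(a))/h = −(1/(2h)) [ ∫_a^m (t − a)² u'''(t) dt + ∫_m^b (b − t)² u'''(t) dt ] (Bochner integrals), and consequently ‖u'(m) − (u(b) − u(a))/h‖² ≤ (h³/320) ∫_a^b ‖u'''(t)‖² dt. -/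
/-!
The kernel `(t - c) ^ 2 • u'''` has the explicit primitive
`(t - c) ^ 2 • u'' - 2 (t - c) • u' + 2 • u`. Evaluating it on `[a, m]` with `c = a` and on
`[m, b]` with `c = b`, the `u''(m)` and `u(m)` terms cancel and the identity remains. For the
bound, the Cauchy–Schwarz inequality is applied on each half separately, where the squared `L²` norm
of the kernel is `(h / 2) ^ 5 / 5`; since it is the same on both halves, combining them through
`(x + y) ^ 2 ≤ 2 (x ^ 2 + y ^ 2)` gives the same constant as Cauchy–Schwarz on `[a, b]`.
-/

/-- Two integrations by parts, in the form of an explicit primitive of `(t - c) ^ 2 • u'''`. -/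
theorem integral_sq_smul_third_deriv {E : Type*} [NormedAddCommGroup E] [NormedSpace ℝ E]
    [CompleteSpace E] {p q : ℝ} (c : ℝ) (hpq : p ≤ q) {u u' u'' u''' : ℝ → E}
    (hu : ∀ t ∈ Set.Icc p q, HasDerivWithinAt u (u' t) (Set.Icc p q) t)
    (hu' : ∀ t ∈ Set.Icc p q, HasDerivWithinAt u' (u'' t) (Set.Icc p q) t)
    (hu'' : ∀ t ∈ Set.Icc p q, HasDerivWithinAt u'' (u''' t) (Set.Icc p q) t)
    (hu''' : ContinuousOn u''' (Set.Icc p q)) :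
    ∫ t in p..q, (t - c) ^ 2 • u''' t =
      ((q - c) ^ 2 • u'' q - (2 * (q - c)) • u' q + (2 : ℝ) • u q)
        - ((p - c) ^ 2 • u'' p - (2 * (p - c)) • u' p + (2 : ℝ) • u p) := by
  have hF : ∀ t ∈ Set.Icc p q, HasDerivWithinAt
      (fun t => (t - c) ^ 2 • u'' t - (2 * (t - c)) • u' t + (2 : ℝ) • u t)
      ((t - c) ^ 2 • u''' t) (Set.Icc p q) t := by
    intro t ht
    have h1 : HasDerivWithinAt (fun t : ℝ => t - c) 1 (Set.Icc p q) t :=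
      (hasDerivWithinAt_id t _).sub_const c
    have h2 : HasDerivWithinAt (fun t : ℝ => (t - c) ^ 2) (2 * (t - c)) (Set.Icc p q) t := by
      simpa using h1.fun_pow 2
    have h3 : HasDerivWithinAt (fun t : ℝ => 2 * (t - c)) 2 (Set.Icc p q) t := by
      simpa using h1.const_mul 2
    have := ((h2.smul (hu'' t ht)).sub (h3.smul (hu' t ht))).add ((hu t ht).const_smul (2 : ℝ))
    refine this.congr_deriv ?_
    module
  refine intervalIntegral.integral_eq_sub_of_hasDerivAt_of_le hpq
    (fun t ht => (hF t ht).continuousWithinAt)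
    (fun t ht => (hF t (Set.Ioo_subset_Icc_self ht)).hasDerivAt (Icc_mem_nhds ht.1 ht.2)) ?_
  apply ContinuousOn.intervalIntegrable_of_Icc hpq
  fun_prop

/-- Cauchy–Schwarz against the kernel `(t - c) ^ 2`, whose squared `L²` norm is explicit. -/
theorem norm_integral_sq_smul_sq_le {E : Type*} [NormedAddCommGroup E] [NormedSpace ℝ E]
    {p q : ℝ} (c : ℝ) (hpq : p < q) {w : ℝ → E} (hw : ContinuousOn w (Set.Icc p q)) :
    ‖∫ t in p..q, (t - c) ^ 2 • w t‖ ^ 2 ≤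
      (((q - c) ^ 5 - (p - c) ^ 5) / 5) * ∫ t in p..q, ‖w t‖ ^ 2 := by
  have hI : ∫ t in p..q, (t - c) ^ 4 = ((q - c) ^ 5 - (p - c) ^ 5) / 5 := by
    rw [intervalIntegral.integral_comp_sub_right (fun t => t ^ 4) c, integral_pow]
    norm_num
  set K := ((q - c) ^ 5 - (p - c) ^ 5) / 5 with hK
  have hKpos : 0 < K := by
    have : (p - c) ^ 5 < (q - c) ^ 5 :=
      (show Odd 5 by decide).strictMono_pow (by linarith)
    rw [hK]; linarith
  set A := ∫ t in p..q, (t - c) ^ 2 * ‖w t‖ with hA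
  set G := ∫ t in p..q, ‖w t‖ ^ 2 with hG
  have hnorm : ‖∫ t in p..q, (t - c) ^ 2 • w t‖ ≤ A := by
    refine (intervalIntegral.norm_integral_le_integral_norm hpq.le).trans_eq ?_
    simp only [norm_smul, norm_pow, Real.norm_eq_abs, sq_abs, hA]
  have i1 : IntervalIntegrable (fun t => (t - c) ^ 4) MeasureTheory.volume p q := by
    apply ContinuousOn.intervalIntegrable_of_Icc hpq.le; fun_prop
  have i2 : IntervalIntegrable (fun t => (t - c) ^ 2 * ‖w t‖) MeasureTheory.volume p q := by
    apply ContinuousOn.intervalIntegrable_of_Icc hpq.le; fun_prop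
  have i3 : IntervalIntegrable (fun t => ‖w t‖ ^ 2) MeasureTheory.volume p q := by
    apply ContinuousOn.intervalIntegrable_of_Icc hpq.le; fun_prop
  -- Nonnegativity of `∫ (A k - K ‖w‖) ^ 2 = K (K G - A ^ 2)` for the kernel `k`.
  have h0 : 0 ≤ ∫ t in p..q, (A * (t - c) ^ 2 - K * ‖w t‖) ^ 2 :=
    intervalIntegral.integral_nonneg hpq.le (fun t _ => sq_nonneg _)
  have hexp : ∫ t in p..q, (A * (t - c) ^ 2 - K * ‖w t‖) ^ 2 = K * (K * G - A ^ 2) := by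
    have : ∀ t, (A * (t - c) ^ 2 - K * ‖w t‖) ^ 2 =
        A ^ 2 * (t - c) ^ 4 - 2 * A * K * ((t - c) ^ 2 * ‖w t‖) + K ^ 2 * ‖w t‖ ^ 2 := by
      intro t; ring
    simp only [this]
    rw [intervalIntegral.integral_add ((i1.const_mul _).sub (i2.const_mul _)) (i3.const_mul _),
      intervalIntegral.integral_sub (i1.const_mul _) (i2.const_mul _),
      intervalIntegral.integral_const_mul, intervalIntegral.integral_const_mul,
      intervalIntegral.integral_const_mul, hI, ← hA, ← hG]
    ring
  rw [hexp] at h0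
  have h1 : 0 ≤ K * G - A ^ 2 := nonneg_of_mul_nonneg_right h0 hKpos
  have h2 := pow_le_pow_left₀ (norm_nonneg _) hnorm 2
  linarith


/-- Crank–Nicolson consistency estimate for
`r₂ = u'(m) − (u(b) − u(a))/h`, with `m = (a+b)/2` and `h = b − a`. -/
theorem stmt_8 {E : Type*} [NormedAddCommGroup E] [NormedSpace ℝ E] [CompleteSpace E]
    (a b : ℝ) (hab : a < b)
    (u u' u'' u''' : ℝ → E)
    (hu : ∀ t ∈ Set.Icc a b, HasDerivWithinAt u (u' t) (Set.Icc a b) t)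
    (hu' : ∀ t ∈ Set.Icc a b, HasDerivWithinAt u' (u'' t) (Set.Icc a b) t)
    (hu'' : ∀ t ∈ Set.Icc a b, HasDerivWithinAt u'' (u''' t) (Set.Icc a b) t)
    (hu''' : ContinuousOn u''' (Set.Icc a b)) :
    u' ((a + b) / 2) - (b - a)⁻¹ • (u b - u a) =
      -((2 * (b - a))⁻¹ • ((∫ t in a..((a + b) / 2), (t - a) ^ 2 • u''' t)
        + ∫ t in ((a + b) / 2)..b, (b - t) ^ 2 • u''' t)) ∧
    ‖u' ((a + b) / 2) - (b - a)⁻¹ • (u b - u a)‖ ^ 2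
      ≤ ((b - a) ^ 3 / 320) * ∫ t in a..b, ‖u''' t‖ ^ 2 := by
  set m := (a + b) / 2 with hm
  have ham : a < m := by rw [hm]; linarith
  have hmb : m < b := by rw [hm]; linarith
  have s1 : Set.Icc a m ⊆ Set.Icc a b := Set.Icc_subset_Icc_right hmb.le
  have s2 : Set.Icc m b ⊆ Set.Icc a b := Set.Icc_subset_Icc_left ham.le
  have hflip : ∫ t in m..b, (b - t) ^ 2 • u''' t = ∫ t in m..b, (t - b) ^ 2 • u''' t := by
    simp only [sub_sq_comm]
  rw [hflip]
  have e1 := integral_sq_smul_third_deriv a ham.le (fun t ht => (hu t (s1 ht)).mono s1)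
    (fun t ht => (hu' t (s1 ht)).mono s1) (fun t ht => (hu'' t (s1 ht)).mono s1) (hu'''.mono s1)
  have e2 := integral_sq_smul_third_deriv b hmb.le (fun t ht => (hu t (s2 ht)).mono s2)
    (fun t ht => (hu' t (s2 ht)).mono s2) (fun t ht => (hu'' t (s2 ht)).mono s2) (hu'''.mono s2)
  have c1 := norm_integral_sq_smul_sq_le a ham (hu'''.mono s1)
  have c2 := norm_integral_sq_smul_sq_le b hmb (hu'''.mono s2)
  have hh : b - a ≠ 0 := by linarith
  have hid : u' m - (b - a)⁻¹ • (u b - u a) =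
      -((2 * (b - a))⁻¹ • ((∫ t in a..m, (t - a) ^ 2 • u''' t)
        + ∫ t in m..b, (t - b) ^ 2 • u''' t)) := by
    rw [e1, e2, hm]
    match_scalars <;> field_simp <;> ring
  refine ⟨hid, ?_⟩
  have hG : (∫ t in a..m, ‖u''' t‖ ^ 2) + ∫ t in m..b, ‖u''' t‖ ^ 2
      = ∫ t in a..b, ‖u''' t‖ ^ 2 := by
    apply intervalIntegral.integral_add_adjacent_intervals
    · exact ((hu'''.mono s1).norm.pow 2).intervalIntegrable_of_Icc ham.le
    · exact ((hu'''.mono s2).norm.pow 2).intervalIntegrable_of_Icc hmb.le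
  rw [hid, ← hG, norm_neg, norm_smul, mul_pow]
  set I₁ := ∫ t in a..m, (t - a) ^ 2 • u''' t
  set I₂ := ∫ t in m..b, (t - b) ^ 2 • u''' t
  set G₁ := ∫ t in a..m, ‖u''' t‖ ^ 2
  set G₂ := ∫ t in m..b, ‖u''' t‖ ^ 2
  have k1 : ((m - a) ^ 5 - (a - a) ^ 5) / 5 = (b - a) ^ 5 / 160 := by rw [hm]; ring
  have k2 : ((b - b) ^ 5 - (m - b) ^ 5) / 5 = (b - a) ^ 5 / 160 := by rw [hm]; ring
  rw [k1] at c1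
  rw [k2] at c2
  have hsum : ‖I₁ + I₂‖ ^ 2 ≤ (b - a) ^ 5 / 80 * (G₁ + G₂) := by
    have := pow_le_pow_left₀ (norm_nonneg _) (norm_add_le I₁ I₂) 2
    nlinarith [sq_nonneg (‖I₁‖ - ‖I₂‖)]
  calc ‖(2 * (b - a))⁻¹‖ ^ 2 * ‖I₁ + I₂‖ ^ 2
      ≤ ‖(2 * (b - a))⁻¹‖ ^ 2 * ((b - a) ^ 5 / 80 * (G₁ + G₂)) := by gcongr
    _ = (b - a) ^ 3 / 320 * (G₁ + G₂) := by
      rw [Real.norm_eq_abs, sq_abs]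
      field_simp
      ring
end

section
/- Let E be a real Banach space, let a ∈ ℝ and h > 0, and let u : ℝ → E be three times continuously differentiable on [a, a+2h]. Then (u'(a+2h) − u'(a+h))/h − (u(a+2h) − 2u(a+h) + u(a))/h² = (1/h²) ∫_a^{a+h} (t − a)(u''(t+h) − u''(t)) dt (Bochner integral), and consequently ‖(u'(a+2h) − u'(a+h))/h − (u(a+2h) − 2u(a+h) + u(a))/h²‖² ≤ (h/4) ∫_a^{a+2h} ‖u'''(t)‖² dt. -/
/-!
With `G t = (t - a) • (u' (t + h) - u' t) - (u (t + h) - u t)` one has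
`G' t = (t - a) • (u'' (t + h) - u'' t)`, and `G (a + h) - G a` is `h ^ 2` times the left-hand
side, so the identity is the fundamental theorem of calculus on `[a, a + h]`.

For the bound, `u'' (t + h) - u'' t = ∫ s in t..t+h, u''' s`, so Cauchy-Schwarz
(`sq_integral_le`) gives `‖u'' (t + h) - u'' t‖ ≤ √(h * J)` with `J = ∫ ‖u'''‖ ^ 2` over
`[a, a + 2h]`. As `∫ t in a..a+h, (t - a) = h ^ 2 / 2`, the norm of the left-hand side is at most
`√(h * J) / 2`.
-/

/-- Cauchy-Schwarz against the constant `1`, obtained by integrating the square `(f - m) ^ 2 ≥ 0`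
where `m` is the mean of `f`. -/
lemma sq_integral_le {f : ℝ → ℝ} {c d : ℝ} (hcd : c < d) (hf : ContinuousOn f (Set.Icc c d)) :
    (∫ t in c..d, f t) ^ 2 ≤ (d - c) * ∫ t in c..d, f t ^ 2 := by
  have hi : IntervalIntegrable f MeasureTheory.volume c d :=
    hf.intervalIntegrable_of_Icc hcd.le
  have hi2 : IntervalIntegrable (fun t => f t ^ 2) MeasureTheory.volume c d :=
    (hf.pow 2).intervalIntegrable_of_Icc hcd.le
  have hpos : 0 < d - c := sub_pos.2 hcd
  set S := ∫ t in c..d, f t with hS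
  obtain ⟨m, hSm⟩ : ∃ m, S = m * (d - c) := ⟨S / (d - c), by field_simp⟩
  have h0 : 0 ≤ ∫ t in c..d, (f t - m) ^ 2 :=
    intervalIntegral.integral_nonneg hcd.le fun t _ => sq_nonneg _
  have h1 : ∫ t in c..d, (f t - m) ^ 2
      = (∫ t in c..d, f t ^ 2) - 2 * m * S + (d - c) * m ^ 2 := by
    have e : (fun t => (f t - m) ^ 2) = fun t => (f t ^ 2 - 2 * m * f t) + m ^ 2 := by
      funext t; ring
    rw [e, intervalIntegral.integral_add (hi2.sub (hi.const_mul _)) (by simp),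
      intervalIntegral.integral_sub hi2 (hi.const_mul _),
      intervalIntegral.integral_const_mul, intervalIntegral.integral_const, smul_eq_mul]
  rw [h1, hSm] at h0
  rw [hSm]
  nlinarith [mul_nonneg hpos.le h0]

/-- Difference quotient of consecutive backward Euler truncation
errors: identity and bound `(h/4) ∫_a^{a+2h} ‖u'''‖²`. -/
theorem stmt_9 {E : Type*} [NormedAddCommGroup E] [NormedSpace ℝ E] [CompleteSpace E]
    (a h : ℝ) (hh : 0 < h)
    (u u' u'' u''' : ℝ → E)
    (hu : ∀ t ∈ Set.Icc a (a + 2*h), HasDerivWithinAt u (u' t) (Set.Icc a (a + 2*h)) t)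
    (hu' : ∀ t ∈ Set.Icc a (a + 2*h), HasDerivWithinAt u' (u'' t) (Set.Icc a (a + 2*h)) t)
    (hu'' : ∀ t ∈ Set.Icc a (a + 2*h), HasDerivWithinAt u'' (u''' t) (Set.Icc a (a + 2*h)) t)
    (hu''' : ContinuousOn u''' (Set.Icc a (a + 2*h))) :
    h⁻¹ • (u' (a + 2*h) - u' (a + h))
        - (h^2)⁻¹ • (u (a + 2*h) - (2:ℝ) • u (a + h) + u a) =
      (h^2)⁻¹ • ∫ t in a..(a + h), (t - a) • (u'' (t + h) - u'' t) ∧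
    ‖h⁻¹ • (u' (a + 2*h) - u' (a + h))
        - (h^2)⁻¹ • (u (a + 2*h) - (2:ℝ) • u (a + h) + u a)‖ ^ 2
      ≤ (h / 4) * ∫ t in a..(a + 2*h), ‖u''' t‖ ^ 2 := by
  have shift : ∀ t ∈ Set.Icc a (a + h), t + h ∈ Set.Icc a (a + 2*h) := fun t ht =>
    ⟨by linarith [ht.1], by linarith [ht.2]⟩
  have incl : ∀ t ∈ Set.Icc a (a + h), t ∈ Set.Icc a (a + 2*h) := fun t ht =>
    ⟨ht.1, by linarith [ht.2]⟩
  have cont : ∀ {v v' : ℝ → E}, (∀ t ∈ Set.Icc a (a + 2*h),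
      HasDerivWithinAt v (v' t) (Set.Icc a (a + 2*h)) t) →
      ContinuousOn v (Set.Icc a (a + 2*h)) := fun hv t ht => (hv t ht).continuousWithinAt
  have contd : ∀ {v : ℝ → E}, ContinuousOn v (Set.Icc a (a + 2*h)) →
      ContinuousOn (fun t => v (t + h) - v t) (Set.Icc a (a + h)) := fun hv =>
    (hv.comp (by fun_prop) shift).sub (hv.mono incl)
  have derd : ∀ {v v' : ℝ → E}, (∀ t ∈ Set.Icc a (a + 2*h),
      HasDerivWithinAt v (v' t) (Set.Icc a (a + 2*h)) t) → ∀ t ∈ Set.Ioo a (a + h),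
      HasDerivAt (fun t => v (t + h) - v t) (v' (t + h) - v' t) t := by
    intro v v' hv t ht
    have h1 : HasDerivAt v (v' (t + h)) (t + h) :=
      (hv _ (shift t ⟨ht.1.le, ht.2.le⟩)).hasDerivAt
        (Icc_mem_nhds (by linarith [ht.1]) (by linarith [ht.2]))
    have h2 : HasDerivAt v (v' t) t :=
      (hv _ (incl t ⟨ht.1.le, ht.2.le⟩)).hasDerivAt
        (Icc_mem_nhds ht.1 (by linarith [ht.2]))
    exact (h1.comp_add_const t h).sub h2
  have ci : ContinuousOn (fun t => (t - a) • (u'' (t + h) - u'' t)) (Set.Icc a (a + h)) :=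
    ContinuousOn.smul (by fun_prop) (contd (cont hu''))
  have ftc : ∫ t in a..(a + h), (t - a) • (u'' (t + h) - u'' t)
      = h • (u' (a + 2*h) - u' (a + h)) - (u (a + 2*h) - (2:ℝ) • u (a + h) + u a) := by
    have key := intervalIntegral.integral_eq_sub_of_hasDerivAt_of_le
      (f := fun t => (t - a) • (u' (t + h) - u' t) - (u (t + h) - u t))
      (f' := fun t => (t - a) • (u'' (t + h) - u'' t)) (by linarith : a ≤ a + h)
      ((ContinuousOn.smul (by fun_prop) (contd (cont hu'))).sub (contd (cont hu)))
      (fun t ht => by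
        have := (((hasDerivAt_id t).sub_const a).smul (derd hu' t ht)).sub (derd hu t ht)
        refine this.congr_deriv ?_
        simp)
      (ci.intervalIntegrable_of_Icc (by linarith))
    rw [key, show a + h + h = a + 2*h by ring, add_sub_cancel_left, sub_self, zero_smul, two_smul]
    abel
  have ident : h⁻¹ • (u' (a + 2*h) - u' (a + h))
        - (h^2)⁻¹ • (u (a + 2*h) - (2:ℝ) • u (a + h) + u a) =
      (h^2)⁻¹ • ∫ t in a..(a + h), (t - a) • (u'' (t + h) - u'' t) := by
    rw [ftc, smul_sub _ (h • _), smul_smul, show (h^2)⁻¹ * h = h⁻¹ by field_simp]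
  refine ⟨ident, ?_⟩
  rw [ident]
  set J := ∫ t in a..(a + 2*h), ‖u''' t‖ ^ 2 with hJ
  have hJ0 : 0 ≤ J := intervalIntegral.integral_nonneg (by linarith) fun t _ => sq_nonneg _
  have hJi : IntervalIntegrable (fun t => ‖u''' t‖ ^ 2) MeasureTheory.volume a (a + 2*h) :=
    (hu'''.norm.pow 2).intervalIntegrable_of_Icc (by linarith)
  have bound : ∀ t ∈ Set.Icc a (a + h), ‖u'' (t + h) - u'' t‖ ≤ √(h * J) := by
    intro t ht
    have hsub : Set.Icc t (t + h) ⊆ Set.Icc a (a + 2*h) :=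
      Set.Icc_subset_Icc ht.1 (by linarith [ht.2])
    have htt : t ≤ t + h := by linarith
    have c3 := hu'''.mono hsub
    rw [← intervalIntegral.integral_eq_sub_of_hasDerivAt_of_le htt ((cont hu'').mono hsub)
      (fun s hs => (hu'' s (hsub ⟨hs.1.le, hs.2.le⟩)).hasDerivAt
        (Icc_mem_nhds (by linarith [ht.1, hs.1]) (by linarith [ht.2, hs.2])))
      (c3.intervalIntegrable_of_Icc htt)]
    refine (intervalIntegral.norm_integral_le_integral_norm htt).trans (Real.le_sqrt_of_sq_le ?_)
    refine (sq_integral_le (by linarith) c3.norm).trans ?_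
    rw [add_sub_cancel_left]
    refine mul_le_mul_of_nonneg_left ?_ hh.le
    exact intervalIntegral.integral_mono_interval ht.1 htt (by linarith [ht.2])
      (Filter.Eventually.of_forall fun s => sq_nonneg _) hJi
  have hI : ‖∫ t in a..(a + h), (t - a) • (u'' (t + h) - u'' t)‖ ≤ h^2 / 2 * √(h * J) := by
    have e : ∫ t in a..(a + h), (t - a) * √(h * J) = h^2 / 2 * √(h * J) := by
      rw [intervalIntegral.integral_mul_const,
        intervalIntegral.integral_comp_sub_right (fun x => x) a, integral_id]
      ring
    rw [← e]
    refine intervalIntegral.norm_integral_le_of_norm_le (by linarith)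
      (Filter.Eventually.of_forall fun t ht => ?_)
      (Continuous.intervalIntegrable (by fun_prop) _ _)
    rw [norm_smul, Real.norm_of_nonneg (by linarith [ht.1])]
    exact mul_le_mul_of_nonneg_left (bound t ⟨ht.1.le, ht.2⟩) (by linarith [ht.1])
  rw [norm_smul, Real.norm_of_nonneg (by positivity)]
  calc _ ≤ ((h^2)⁻¹ * (h^2 / 2 * √(h * J))) ^ 2 := by gcongr
    _ = (√(h * J)) ^ 2 / 4 := by field_simp; norm_num; ring
    _ = h / 4 * J := by rw [Real.sq_sqrt (by positivity)]; ring
end
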